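/- Let (Ω, ℱ, ℙ) be a probability space, r > 0, and let ζ : Ω → 𝒞_r be Borel measurable with E(‖ζ‖_{𝒞_r}²) < ∞. For s ∈ [−r, 0] and i ∈ ℤ, let 𝓛_{ζ(s)_i} ∈ P₂(ℝ) denote the law of the real random variable ω ↦ ζ(ω)(s)_i. Then for every s ∈ [−r, 0] the sequence (𝓛_{ζ(s)_i})_{i∈ℤ} belongs to 𝓛², and the map s ↦ (𝓛_{ζ(s)_i})_{i∈ℤ} is continuous from [−r, 0] into the metric space (𝓛², ρ). -/

import Mathlib

/-!
The joint law of two real random variables `X`, `Y` is a coupling of their laws, so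
`W₂(𝓛_X, 𝓛_Y) ≤ ‖X - Y‖_{L²(P)}`. Summing the squares over the coordinates and exchanging sum and
expectation shows that `U ↦ (𝓛_{U_i})_i` is `1`-Lipschitz from `L²(P; ℓ²)` to `𝓛²`. Twice the
supremum norm of the path dominates its increments, so continuity in `s` follows from pathwise
continuity and dominated convergence in `L²(P; ℓ²)`.
-/

open MeasureTheory ENNReal

noncomputable section

/-- Borel probability measures on `ℝ` with finite second moment. -/
def P2 : Set (Measure ℝ) :=
  {μ | IsProbabilityMeasure μ ∧ (∫⁻ x, ENNReal.ofReal (x ^ 2) ∂μ) < ⊤}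

/-- `π` is a coupling of `μ` and `ν`. -/
def IsCoupling (π : Measure (ℝ × ℝ)) (μ ν : Measure ℝ) : Prop :=
  π.map Prod.fst = μ ∧ π.map Prod.snd = ν

/-- The 2-Wasserstein distance (as an extended nonnegative real). -/
def W2e (μ ν : Measure ℝ) : ℝ≥0∞ :=
  ⨅ (π : Measure (ℝ × ℝ)) (_ : IsProbabilityMeasure π) (_ : IsCoupling π μ ν),
    (∫⁻ p, ENNReal.ofReal ((p.1 - p.2) ^ 2) ∂π) ^ (1/2 : ℝ)

/-- The 2-Wasserstein distance. -/
def W2 (μ ν : Measure ℝ) : ℝ := (W2e μ ν).toReal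

/-- The space `ℓ²` of square-summable real sequences indexed by `ℤ`. -/
abbrev l2Z := lp (fun _ : ℤ => ℝ) 2

/-- The Banach space `𝒞_r = C([-r, 0], ℓ²)` with the supremum norm. -/
abbrev Cseg (r : ℝ) := C(Set.Icc (-r) (0 : ℝ), l2Z)

open Filter Topology
open scoped lp

section LpPrelim

variable {Ω κ ι : Type*} [MeasurableSpace Ω] {P : Measure Ω} {p : ℝ≥0∞}

lemma lintegral_enorm_rpow_eq_eLpNorm_rpow {ε : Type*} [ENorm ε] (hp0 : p ≠ 0) (hp : p ≠ ∞)
    (f : Ω → ε) : ∫⁻ ω, ‖f ω‖ₑ ^ p.toReal ∂P = eLpNorm f p P ^ p.toReal := by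
  lift p to NNReal using hp
  exact (eLpNorm_nnreal_pow_eq_lintegral (by exact_mod_cast hp0)).symm

lemma lintegral_ofReal_sq_eq_eLpNorm_sq (f : Ω → ℝ) :
    ∫⁻ ω, ENNReal.ofReal (f ω ^ 2) ∂P = eLpNorm f 2 P ^ 2 := by
  simpa [← ofReal_norm, ← ENNReal.ofReal_pow] using
    lintegral_enorm_rpow_eq_eLpNorm_rpow (P := P) two_ne_zero ofNat_ne_top f

lemma tendsto_eLpNorm_zero_of_dominated {ε : Type*} [ENorm ε] {l : Filter κ}
    [l.IsCountablyGenerated] (hp0 : p ≠ 0) (hp : p ≠ ∞) {F : κ → Ω → ε} {bound : Ω → ℝ≥0∞}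
    (hF : ∀ᶠ n in l, AEMeasurable (fun ω => ‖F n ω‖ₑ) P)
    (hbound : ∀ᶠ n in l, ∀ᵐ ω ∂P, ‖F n ω‖ₑ ≤ bound ω) (hfin : eLpNorm bound p P ≠ ∞)
    (hlim : ∀ᵐ ω ∂P, Tendsto (fun n => ‖F n ω‖ₑ) l (𝓝 0)) :
    Tendsto (fun n => eLpNorm (F n) p P) l (𝓝 0) := by
  have hpos : 0 < p.toReal := ENNReal.toReal_pos hp0 hp
  have hlintegral : Tendsto (fun n => ∫⁻ ω, ‖F n ω‖ₑ ^ p.toReal ∂P) l (𝓝 (∫⁻ _, 0 ∂P)) := by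
    refine tendsto_lintegral_filter_of_dominated_convergence' (fun ω => bound ω ^ p.toReal)
      (hF.mono fun n hn => hn.pow_const _) ?_ ?_ ?_
    · filter_upwards [hbound] with n hn
      filter_upwards [hn] with ω hω
      gcongr
    · have hpow := lintegral_enorm_rpow_eq_eLpNorm_rpow (P := P) hp0 hp bound
      simp only [enorm_eq_self] at hpow
      exact hpow ▸ ENNReal.rpow_ne_top_of_nonneg hpos.le hfin
    · filter_upwards [hlim] with ω hω
      simpa [hpos] using hω.ennrpow_const p.toReal
  simp only [eLpNorm_eq_lintegral_rpow_enorm_toReal hp0 hp]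
  simpa [hpos] using hlintegral.ennrpow_const (1 / p.toReal)

variable {E : ι → Type*} [∀ i, NormedAddCommGroup (E i)] [Fact (1 ≤ p)]

lemma tsum_enorm_rpow_eq_enorm_rpow (hp : p ≠ ∞) (u : lp E p) :
    ∑' i, ‖u i‖ₑ ^ p.toReal = ‖u‖ₑ ^ p.toReal := by
  have hpos : 0 < p.toReal := (toReal_pos_iff_ne_top p).2 hp
  have hsum := lp.hasSum_norm hpos u
  simp only [← ofReal_norm, ENNReal.ofReal_rpow_of_nonneg (norm_nonneg _) hpos.le]
  rw [← hsum.tsum_eq, ENNReal.ofReal_tsum_of_nonneg (fun i => by positivity) hsum.summable]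

lemma measurable_coord_eval {K : Type*} [TopologicalSpace K] [MeasurableSpace C(K, lp E p)]
    [OpensMeasurableSpace C(K, lp E p)] [∀ i, MeasurableSpace (E i)] [∀ i, BorelSpace (E i)]
    {ζ : Ω → C(K, lp E p)} (hζ : Measurable ζ) (s : K) (i : ι) :
    Measurable fun ω => ζ ω s i :=
  ((continuous_apply i).comp
    (lp.uniformContinuous_coe.continuous.comp (continuous_eval_const s))).measurable.comp hζ

variable [Countable ι]

lemma aemeasurable_enorm_of_coord (hp : p ≠ ∞) {U : Ω → lp E p}
    (hU : ∀ i, AEMeasurable (fun ω => ‖U ω i‖ₑ) P) : AEMeasurable (fun ω => ‖U ω‖ₑ) P := by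
  have hpow : ∀ ω, (∑' i, ‖U ω i‖ₑ ^ p.toReal) ^ p.toReal⁻¹ = ‖U ω‖ₑ := fun ω => by
    rw [tsum_enorm_rpow_eq_enorm_rpow hp,
      ENNReal.rpow_rpow_inv ((toReal_pos_iff_ne_top p).2 hp).ne']
  simp only [← hpow]
  exact (AEMeasurable.tsum fun i => (hU i).pow_const _).pow_const _

lemma tsum_eLpNorm_coord_rpow (hp : p ≠ ∞) {U : Ω → lp E p}
    (hU : ∀ i, AEMeasurable (fun ω => ‖U ω i‖ₑ) P) :
    ∑' i, eLpNorm (fun ω => U ω i) p P ^ p.toReal = eLpNorm U p P ^ p.toReal := by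
  have hp0 : p ≠ 0 := (zero_lt_one.trans_le Fact.out).ne'
  simp only [← lintegral_enorm_rpow_eq_eLpNorm_rpow hp0 hp]
  rw [← lintegral_tsum fun i => (hU i).pow_const _]
  simp only [tsum_enorm_rpow_eq_enorm_rpow hp]

end LpPrelim

section WassersteinLaw

variable {Ω : Type*} [MeasurableSpace Ω] {P : Measure Ω} [IsProbabilityMeasure P] {X Y : Ω → ℝ}

lemma map_mem_P2 (hX : AEMeasurable X P) (hfin : eLpNorm X 2 P ≠ ∞) : P.map X ∈ P2 := by
  refine ⟨Measure.isProbabilityMeasure_map hX, ?_⟩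
  rw [lintegral_map' (by fun_prop) hX, lintegral_ofReal_sq_eq_eLpNorm_sq]
  exact ENNReal.pow_lt_top hfin.lt_top

lemma W2e_map_le_eLpNorm_sub (hX : AEMeasurable X P) (hY : AEMeasurable Y P) :
    W2e (P.map X) (P.map Y) ≤ eLpNorm (X - Y) 2 P := by
  have hXY : AEMeasurable (fun ω => (X ω, Y ω)) P := hX.prodMk hY
  have hcoupling : IsCoupling (P.map fun ω => (X ω, Y ω)) (P.map X) (P.map Y) :=
    ⟨Measure.fst_map_prodMk₀ hY, Measure.snd_map_prodMk₀ hX⟩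
  calc W2e (P.map X) (P.map Y)
      ≤ (∫⁻ q, ENNReal.ofReal ((q.1 - q.2) ^ 2) ∂P.map fun ω => (X ω, Y ω)) ^ (1 / 2 : ℝ) :=
        iInf₂_le_of_le _ (Measure.isProbabilityMeasure_map hXY) (iInf_le _ hcoupling)
    _ = (eLpNorm (X - Y) 2 P ^ 2) ^ (1 / 2 : ℝ) := by
        rw [lintegral_map' (by fun_prop) hXY, ← lintegral_ofReal_sq_eq_eLpNorm_sq]
        rfl
    _ = eLpNorm (X - Y) 2 P := by
        rw [← ENNReal.rpow_natCast, ← ENNReal.rpow_mul]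
        norm_num

end WassersteinLaw

/-- The space `𝓛²` over an arbitrary index type: sequences of elements of `P2` whose `W2` distances
to `δ₀` are square-summable. -/
def Lsq (ι : Type*) : Set (ι → Measure ℝ) :=
  {μ | (∀ i, μ i ∈ P2) ∧ Summable fun i => W2 (μ i) (Measure.dirac 0) ^ 2}

/-- The distance `ρ` on `𝓛²`. It takes the junk value `0` when the squared `W2` distances are not
summable. -/
def rho {ι : Type*} (μ ν : ι → Measure ℝ) : ℝ :=
  √(∑' i, W2 (μ i) (ν i) ^ 2)

/-- The sequence `(𝓛_{U_i})_i` of the laws of the coordinates of a random element `U` of `ℓ²`. -/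
def coordLaw {Ω ι : Type*} [MeasurableSpace Ω] (P : Measure Ω) (U : Ω → ℓ²(ι, ℝ)) :
    ι → Measure ℝ :=
  fun i => P.map fun ω => U ω i

section CoordLaw

variable {Ω ι : Type*} [MeasurableSpace Ω] {P : Measure Ω} [IsProbabilityMeasure P] [Countable ι]
  {U V : Ω → ℓ²(ι, ℝ)}

lemma tsum_W2e_coordLaw_sq_le (hU : ∀ i, AEMeasurable (fun ω => U ω i) P)
    (hV : ∀ i, AEMeasurable (fun ω => V ω i) P) :
    ∑' i, W2e (coordLaw P U i) (coordLaw P V i) ^ 2 ≤ eLpNorm (U - V) 2 P ^ 2 := by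
  have hcoord := tsum_eLpNorm_coord_rpow (P := P) (U := U - V) ofNat_ne_top
    fun i => ((hU i).sub (hV i)).enorm
  simp only [toReal_ofNat, rpow_ofNat] at hcoord
  rw [← hcoord]
  exact ENNReal.tsum_le_tsum fun i => pow_le_pow_left' (W2e_map_le_eLpNorm_sub (hU i) (hV i)) 2

lemma summable_W2_coordLaw_sq (hU : ∀ i, AEMeasurable (fun ω => U ω i) P)
    (hV : ∀ i, AEMeasurable (fun ω => V ω i) P) (hfin : eLpNorm (U - V) 2 P ≠ ∞) :
    Summable fun i => W2 (coordLaw P U i) (coordLaw P V i) ^ 2 := by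
  simpa only [W2, toReal_pow] using ENNReal.summable_toReal
    ((tsum_W2e_coordLaw_sq_le hU hV).trans_lt (ENNReal.pow_lt_top hfin.lt_top)).ne

lemma coordLaw_mem_Lsq (hU : ∀ i, AEMeasurable (fun ω => U ω i) P) (hfin : eLpNorm U 2 P ≠ ∞) :
    coordLaw P U ∈ Lsq ι := by
  refine ⟨fun i => map_mem_P2 (hU i) ?_, ?_⟩
  · exact ne_top_of_le_ne_top hfin
      (eLpNorm_mono fun ω => lp.norm_apply_le_norm two_ne_zero (U ω) i)
  · -- `δ₀` is the law of each coordinate of the zero random sequence.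
    simpa [coordLaw] using
      summable_W2_coordLaw_sq (V := 0) hU (fun _ => aemeasurable_const) (by simpa using hfin)

lemma rho_coordLaw_le (hU : ∀ i, AEMeasurable (fun ω => U ω i) P)
    (hV : ∀ i, AEMeasurable (fun ω => V ω i) P) (hfin : eLpNorm (U - V) 2 P ≠ ∞) :
    rho (coordLaw P U) (coordLaw P V) ≤ (eLpNorm (U - V) 2 P).toReal := by
  have hsq : eLpNorm (U - V) 2 P ^ 2 ≠ ∞ := ENNReal.pow_ne_top hfin
  have hle := tsum_W2e_coordLaw_sq_le hU hV
  refine Real.sqrt_le_iff.2 ⟨toReal_nonneg, ?_⟩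
  calc ∑' i, W2 (coordLaw P U i) (coordLaw P V i) ^ 2
      = (∑' i, W2e (coordLaw P U i) (coordLaw P V i) ^ 2).toReal := by
        rw [ENNReal.tsum_toReal_eq (ENNReal.ne_top_of_tsum_ne_top (ne_top_of_le_ne_top hsq hle))]
        simp only [W2, toReal_pow]
    _ ≤ (eLpNorm (U - V) 2 P ^ 2).toReal := toReal_mono hsq hle
    _ = (eLpNorm (U - V) 2 P).toReal ^ 2 := toReal_pow _ _

lemma tendsto_rho_coordLaw_of_dominated {κ : Type*} {l : Filter κ} [l.IsCountablyGenerated]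
    {X : κ → Ω → ℓ²(ι, ℝ)} {g : Ω → ℝ}
    (hX : ∀ᶠ n in l, ∀ i, AEMeasurable (fun ω => X n ω i) P)
    (hU : ∀ i, AEMeasurable (fun ω => U ω i) P)
    (hbound : ∀ᶠ n in l, ∀ᵐ ω ∂P, ‖X n ω - U ω‖ ≤ g ω) (hg : eLpNorm g 2 P ≠ ∞)
    (hlim : ∀ᵐ ω ∂P, Tendsto (fun n => X n ω) l (𝓝 (U ω))) :
    Tendsto (fun n => rho (coordLaw P (X n)) (coordLaw P U)) l (𝓝 0) := by
  have hnorm : Tendsto (fun n => eLpNorm (X n - U) 2 P) l (𝓝 0) := by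
    refine tendsto_eLpNorm_zero_of_dominated (bound := fun ω => ‖g ω‖ₑ) two_ne_zero ofNat_ne_top
      ?_ ?_ (by rwa [eLpNorm_enorm]) ?_
    · filter_upwards [hX] with n hn
      exact aemeasurable_enorm_of_coord ofNat_ne_top fun i => ((hn i).sub (hU i)).enorm
    · filter_upwards [hbound] with n hn
      filter_upwards [hn] with ω hω
      exact enorm_le_iff_norm_le.2 (hω.trans (le_abs_self _))
    · filter_upwards [hlim] with ω hω
      simpa using (hω.sub_const (U ω)).enorm
  refine squeeze_zero' (.of_forall fun n => Real.sqrt_nonneg _) ?_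
    ((ENNReal.tendsto_toReal zero_ne_top).comp hnorm)
  filter_upwards [hX, hbound] with n hXn hn
  exact rho_coordLaw_le hXn hU (ne_top_of_le_ne_top hg (eLpNorm_mono_ae_real hn))

end CoordLaw

theorem law_segment_mem_Lsq_and_continuous_general
    {Ω ι K : Type*} [MeasurableSpace Ω] (P : Measure Ω) [IsProbabilityMeasure P] [Countable ι]
    [TopologicalSpace K] [FirstCountableTopology K] (X : K → Ω → ℓ²(ι, ℝ)) {g : Ω → ℝ}
    (hX : ∀ s i, AEMeasurable (fun ω => X s ω i) P)
    (hcont : ∀ s, ∀ᵐ ω ∂P, ContinuousAt (fun s' => X s' ω) s)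
    (hbound : ∀ s, ∀ᵐ ω ∂P, ‖X s ω‖ ≤ g ω) (hg : MemLp g 2 P) :
    (∀ s, coordLaw P (X s) ∈ Lsq ι) ∧
      ∀ s, Tendsto (fun s' => rho (coordLaw P (X s')) (coordLaw P (X s))) (𝓝 s) (𝓝 0) := by
  refine ⟨fun s => coordLaw_mem_Lsq (hX s) ?_, fun s => ?_⟩
  · exact ne_top_of_le_ne_top hg.eLpNorm_ne_top (eLpNorm_mono_ae_real (hbound s))
  · refine tendsto_rho_coordLaw_of_dominated (.of_forall hX) (hX s) (.of_forall fun s' => ?_)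
      (hg.add hg).eLpNorm_ne_top (hcont s)
    filter_upwards [hbound s', hbound s] with ω hs' hs
    exact norm_sub_le_of_le hs' hs

/-- If `ζ : Ω → 𝒞_r` is Borel measurable with `E‖ζ‖² < ∞`, then for each
`s ∈ [-r, 0]` the sequence of laws `(𝓛_{ζ(s)_i})_{i∈ℤ}` belongs to `𝓛²`, and
`s ↦ (𝓛_{ζ(s)_i})_{i∈ℤ}` is continuous from `[-r, 0]` into `(𝓛², ρ)`. -/
theorem law_segment_mem_Lsq_and_continuous
    {Ω : Type*} [MeasurableSpace Ω] (P : Measure Ω) [IsProbabilityMeasure P]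
    (r : ℝ) (hr : 0 < r)
    [MeasurableSpace (Cseg r)] [BorelSpace (Cseg r)]
    (ζ : Ω → Cseg r) (hζ : Measurable ζ)
    (hint : Integrable (fun ω => ‖ζ ω‖ ^ 2) P) :
    (∀ s : Set.Icc (-r) (0 : ℝ),
      (∀ i : ℤ, P.map (fun ω => ζ ω s i) ∈ P2) ∧
      Summable (fun i : ℤ =>
        (W2 (P.map fun ω => ζ ω s i) (Measure.dirac 0)) ^ 2)) ∧
    ∀ s : Set.Icc (-r) (0 : ℝ), ∀ ε > (0 : ℝ), ∃ δ > (0 : ℝ),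
      ∀ s' : Set.Icc (-r) (0 : ℝ), dist s' s < δ →
        Real.sqrt (∑' i : ℤ,
          (W2 (P.map fun ω => ζ ω s' i) (P.map fun ω => ζ ω s i)) ^ 2) < ε := by
  obtain ⟨hmem, hlim⟩ := law_segment_mem_Lsq_and_continuous_general P (fun s ω => ζ ω s)
    (fun s i => (measurable_coord_eval hζ s i).aemeasurable)
    (fun s => .of_forall fun ω => (ζ ω).continuous.continuousAt)
    (fun s => .of_forall fun ω => (ζ ω).norm_coe_le_norm s)
    ((memLp_two_iff_integrable_sq hζ.norm.aestronglyMeasurable).2 hint)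
  exact ⟨hmem, fun s ε hε => Metric.eventually_nhds_iff.1 ((hlim s).eventually_lt_const hε)⟩

end
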